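/- For any positive integers l, m and n, the Toeplitz graph G_n(1^l 0^m), in which distinct vertices i < j of {1,…,n} are adjacent if and only if the representative of j−i modulo l+m in {1,…,l+m} is at most l, is word-representable. -/

import Mathlib

/-- Two letters `x` and `y` alternate in the word `w` if, after deleting all
letters other than `x` and `y`, consecutive letters always differ
(i.e. the restriction has the form `xyxy⋯` or `yxyx⋯`). -/
def Alternates {V : Type*} [DecidableEq V] (w : List V) (x y : V) : Prop :=
  (w.filter (fun z => z = x || z = y)).Chain' (· ≠ ·)

/-- A word `w` represents the graph `G`: every vertex occurs in `w`, and two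
distinct letters alternate in `w` iff they are adjacent in `G`. -/
def Represents {V : Type*} [DecidableEq V] (w : List V) (G : SimpleGraph V) : Prop :=
  (∀ v, v ∈ w) ∧ ∀ x y : V, x ≠ y → (Alternates w x y ↔ G.Adj x y)

/-- A graph is word-representable if some word represents it. -/
def WordRepresentable {V : Type*} [DecidableEq V] (G : SimpleGraph V) : Prop :=
  ∃ w : List V, Represents w G

/-- The representative of `d` modulo `m` taken in `{1, …, m}`. -/
def repMod (d m : ℕ) : ℕ := if d % m = 0 then m else d % m

/-- The Toeplitz graph `G_n(a₁ ⋯ a_m)` on vertex set `{1,…,n}` (encoded as `Fin n`,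
with `v : Fin n` standing for the label `v+1`): vertices `i < j` are adjacent iff
`a r = true` where `r ∈ {1,…,m}` is congruent to `j - i` modulo `m`. -/
def toeplitzGraph (n m : ℕ) (a : ℕ → Bool) : SimpleGraph (Fin n) :=
  SimpleGraph.fromRel (fun i j => (i : ℕ) < (j : ℕ) ∧ a (repMod ((j : ℕ) - (i : ℕ)) m) = true)

/-!
Orient every edge of `G_n(1^l 0^m)` from the smaller to the larger residue modulo `l + m`. A
directed path along which the residue grows by less than `m` never descends in the usual order of
vertices, and this forces every vertex on a path from `x` to `z` to be joined to both ends as soon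
as `x` and `z` are adjacent: the orientation is semi-transitive.

Semi-transitively oriented finite graphs are word-representable (Halldórsson, Kitaev, Pyatkin). Fix
a vertex `v` and let `A`, `O`, `B`, `T` be its ancestors, its out-neighbours, its remaining
descendants and the remaining vertices, each listed in topological order. Every arc `x → y`
restricts the word `A T v O A v B T O B` to `xyxy`, but `v` alternates with no letter of `B` or
`T`. Of two non-adjacent vertices, at least one is not an ancestor of the other, hence lies in its
`B` or `T`. So the concatenation of these words over all `v` represents the graph.
-/

section Words

variable {V : Type*} [DecidableEq V]

theorem alternates_iff_isChain {w : List V} {x y : V} :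
    Alternates w x y ↔ (w.filter (fun z => z = x || z = y)).IsChain (· ≠ ·) :=
  Iff.rfl

theorem Alternates.symm {w : List V} {x y : V} (h : Alternates w x y) : Alternates w y x := by
  simpa only [Alternates, Bool.or_comm] using h

theorem Alternates.of_infix {u w : List V} {x y : V} (h : Alternates w x y) (huw : u <:+: w) :
    Alternates u x y :=
  List.IsChain.infix h (huw.filter _)

/-- The restriction of `w` to the letters `x` and `y` is a power of `xy`. Unlike `Alternates`, this
is preserved by concatenation. -/
def AlternatesFrom (w : List V) (x y : V) : Prop :=
  ∃ n, w.filter (fun z => z = x || z = y) = (List.replicate n [x, y]).flatten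

namespace AlternatesFrom

variable {x y : V}

theorem alternates {w : List V} (h : AlternatesFrom w x y) (hxy : x ≠ y) : Alternates w x y := by
  obtain ⟨n, hn⟩ := h
  rw [alternates_iff_isChain, hn]
  clear hn
  induction n with
  | zero => simp
  | succ n ih => cases n <;> simp_all [List.replicate_succ, hxy.symm]

theorem append {u w : List V} (hu : AlternatesFrom u x y) (hw : AlternatesFrom w x y) :
    AlternatesFrom (u ++ w) x y := by
  obtain ⟨m, hm⟩ := hu
  obtain ⟨n, hn⟩ := hw
  exact ⟨m + n, by rw [List.filter_append, hm, hn, List.replicate_add, List.flatten_append]⟩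

theorem flatMap {K : Type*} {w : List K} {f : K → List V}
    (h : ∀ k ∈ w, AlternatesFrom (f k) x y) : AlternatesFrom (w.flatMap f) x y := by
  induction w with
  | nil => exact ⟨0, rfl⟩
  | cons k w ih =>
    rw [List.forall_mem_cons] at h
    exact h.1.append (ih h.2)

end AlternatesFrom

end Words

section BlowUp

variable {V K : Type*} [DecidableEq K]

/-- The word obtained from `w` by replacing each letter `k` with the letters of `L` coloured `k`
by `c`, in the order of `L`. -/
def blowUp (w : List K) (c : V → K) (L : List V) : List V :=
  w.flatMap fun k => L.filter (c · = k)

variable {w : List K} {c : V → K} {L : List V} {x y : V}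

theorem blowUp_cons (k : K) : blowUp (k :: w) c L = L.filter (c · = k) ++ blowUp w c L :=
  List.flatMap_cons

theorem mem_blowUp : x ∈ blowUp w c L ↔ x ∈ L ∧ c x ∈ w := by
  simp [blowUp, and_comm]

variable [DecidableEq V]

theorem filter_blowUp_of_ne (hL : L.Nodup) (hx : x ∈ L) (hy : y ∈ L) (hc : c x ≠ c y) :
    (blowUp w c L).filter (fun z => z = x || z = y) =
      (w.filter (fun k => k = c x || k = c y)).map (fun k => if k = c x then x else y) := by
  have filter_eq_singleton {z : V} (hz : z ∈ L) : L.filter (· = z) = [z] := by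
    rw [List.filter_eq, List.count_eq_one_of_mem hL hz, List.replicate_one]
  induction w with
  | nil => rfl
  | cons k w ih =>
    have hk : (L.filter (c · = k)).filter (fun z => z = x || z = y) =
        if k = c x then [x] else if k = c y then [y] else [] := by
      rw [List.filter_filter]
      split_ifs with hkx hky
      · rw [← filter_eq_singleton hx]
        grind
      · rw [← filter_eq_singleton hy]
        grind
      · rw [List.filter_eq_nil_iff]
        grind
    rw [blowUp_cons, List.filter_append, ih, hk]
    split_ifs with hkx hky
    · simp [hkx]
    · simp [hky, hc.symm]
    · simp [hkx, hky]

theorem Alternates.of_blowUp (h : Alternates (blowUp w c L) x y) (hL : L.Nodup) (hx : x ∈ L)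
    (hy : y ∈ L) (hc : c x ≠ c y) : Alternates w (c x) (c y) := by
  rw [alternates_iff_isChain, filter_blowUp_of_ne hL hx hy hc, List.isChain_map] at h
  exact h.imp fun _ _ => ne_of_apply_ne (fun k => if k = c x then x else y)

theorem AlternatesFrom.blowUp_of_ne (h : AlternatesFrom w (c x) (c y)) (hL : L.Nodup) (hx : x ∈ L)
    (hy : y ∈ L) (hc : c x ≠ c y) : AlternatesFrom (blowUp w c L) x y := by
  obtain ⟨n, hn⟩ := h
  refine ⟨n, ?_⟩
  rw [filter_blowUp_of_ne hL hx hy hc, hn]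
  simp [List.map_flatten, hc.symm]

theorem AlternatesFrom.blowUp_of_eq (h : AlternatesFrom L x y) (hc : c x = c y) :
    AlternatesFrom (blowUp w c L) x y := by
  refine AlternatesFrom.flatMap fun k _ => ?_
  by_cases hk : c x = k
  · obtain ⟨n, hn⟩ := h
    refine ⟨n, hn ▸ ?_⟩
    rw [List.filter_filter]
    grind
  · refine ⟨0, ?_⟩
    simp only [List.filter_filter, List.replicate_zero, List.flatten_nil, List.filter_eq_nil_iff]
    grind

end BlowUp

section SemiTransitive

open Relation

variable {V : Type*} {r : V → V → Prop}

/-- The digraph with arcs `r` is acyclic and without shortcuts. The usual definition asks that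
whenever `x → z` is an arc, *any two* vertices of a directed path from `x` to `z` be joined by an
arc; applying `no_shortcut` twice gives that. -/
structure IsSemiTransitive (r : V → V → Prop) : Prop where
  acyclic : ∀ x, ¬ TransGen r x x
  no_shortcut : ∀ {x y z}, r x z → TransGen r x y → TransGen r y z → r x y ∧ r y z

theorem IsSemiTransitive.comap {W : Type*} (hr : IsSemiTransitive r) (f : W → V) :
    IsSemiTransitive fun a b => r (f a) (f b) where
  acyclic a h := hr.acyclic (f a) (h.lift f fun _ _ => id)
  no_shortcut hac hab hbc :=
    hr.no_shortcut hac (hab.lift f fun _ _ => id) (hbc.lift f fun _ _ => id)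

theorem exists_topologicalSort [Finite V] (hr : ∀ x, ¬ TransGen r x x) :
    ∃ L : List V, L.Nodup ∧ (∀ v, v ∈ L) ∧ L.Pairwise fun x y => ¬ r y x := by
  classical
  have := Fintype.ofFinite V
  have : IsPartialOrder V (ReflTransGen r) :=
    { antisymm := fun x y hxy hyx => by
        rcases reflTransGen_iff_eq_or_transGen.1 hxy with rfl | hxy
        · rfl
        · exact (hr x (hxy.trans_left hyx)).elim }
  obtain ⟨s, hs, hrs⟩ := extend_partialOrder (ReflTransGen r)
  refine ⟨Finset.univ.sort s, Finset.sort_nodup _ _, by simp,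
    (Finset.pairwise_sort _ s).imp fun {x y} hxy hyx => ?_⟩
  obtain rfl : x = y := antisymm hxy (hrs _ _ (.single hyx))
  exact hr x (.single hyx)

theorem alternatesFrom_of_pairwise [DecidableEq V] {L : List V} {x y : V}
    (hL : L.Nodup) (hr : L.Pairwise fun x y => ¬ r y x) (hx : x ∈ L) (hy : y ∈ L)
    (hxy : r x y) (hyx : ¬ r y x) : AlternatesFrom L x y := by
  have hne : x ≠ y := by
    rintro rfl
    exact hyx hxy
  have hperm : (L.filter (fun z => z = x || z = y)).Perm [x, y] := by
    rw [List.perm_ext_iff_of_nodup (hL.filter _) (by simpa using hne)]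
    grind
  refine ⟨1, hperm.eq_of_pairwise ?_ (hr.filter _) ?_⟩
  · grind
  · simpa using hyx

/-- The part of the vertex set in which a vertex lies relative to a fixed vertex of an acyclic
digraph. -/
inductive RelPos
  | self | ancestor | outNbr | descendant | unrelated
  deriving DecidableEq

open Classical in
/-- The position of `x` relative to `v` in the digraph with arcs `r`; `descendant` is reserved for
descendants that are not out-neighbours. -/
noncomputable def relPos (r : V → V → Prop) (v x : V) : RelPos :=
  if x = v then .self
  else if TransGen r x v then .ancestor
  else if r v x then .outNbr
  else if TransGen r v x then .descendant
  else .unrelated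

/-- The pattern `A T v O A v B T O B` that separates `v` from its non-neighbours. -/
def relPosWord : List RelPos :=
  [.ancestor, .unrelated, .self, .outNbr, .ancestor, .self, .descendant, .unrelated, .outNbr,
    .descendant]

theorem mem_relPosWord (k : RelPos) : k ∈ relPosWord := by
  cases k <;> decide

theorem IsSemiTransitive.relPos_eq_or_alternatesFrom (hr : IsSemiTransitive r) (v : V) {x y : V}
    (hxy : r x y) : relPos r v x = relPos r v y ∨
      AlternatesFrom relPosWord (relPos r v x) (relPos r v y) := by
  have path_of_arc {a b : V} : r a b → TransGen r a b := .single
  have ancestor_of_ancestor : TransGen r y v → TransGen r x v := .head hxy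
  have descendant_of_descendant : TransGen r v x → TransGen r v y := (.tail · hxy)
  have not_ancestor_of_descendant (z : V) : TransGen r v z → ¬ TransGen r z v :=
    fun hvz hzv => hr.acyclic v (hvz.trans hzv)
  have outNbr_of_ancestor : TransGen r x v → TransGen r v y → r v y :=
    fun hxv hvy => (hr.no_shortcut hxy hxv hvy).2
  have outNbr_of_outNbr : r v y → TransGen r v x → r v x :=
    fun hvy hvx => (hr.no_shortcut hvy hvx (.single hxy)).1
  unfold relPos
  split_ifs <;>
    first
    | exact .inl rfl
    | exact .inr ⟨2, rfl⟩
    | grind [-TransGen]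

theorem IsSemiTransitive.alternatesFrom_blowUp [DecidableEq V] (hr : IsSemiTransitive r)
    {L : List V} (hL : L.Nodup) (hmem : ∀ v, v ∈ L) (hsort : L.Pairwise fun x y => ¬ r y x)
    (v : V) {x y : V} (hxy : r x y) : AlternatesFrom (blowUp relPosWord (relPos r v) L) x y := by
  have hyx : ¬ r y x := fun hyx => hr.acyclic x (.head hxy (.single hyx))
  by_cases hc : relPos r v x = relPos r v y
  · exact (alternatesFrom_of_pairwise hL hsort (hmem x) (hmem y) hxy hyx).blowUp_of_eq hc
  · exact ((hr.relPos_eq_or_alternatesFrom v hxy).resolve_left hc).blowUp_of_ne hL (hmem x)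
      (hmem y) hc

theorem not_alternates_blowUp_relPos [DecidableEq V] {L : List V} (hL : L.Nodup) {v x : V}
    (hv : v ∈ L) (hx : x ∈ L) (hne : x ≠ v) (hvx : ¬ r v x) (hxv : ¬ TransGen r x v) :
    ¬ Alternates (blowUp relPosWord (relPos r v) L) v x := by
  intro h
  have hself : relPos r v v = .self := if_pos rfl
  have hpos : relPos r v x = .descendant ∨ relPos r v x = .unrelated := by
    grind [relPos]
  have hc : relPos r v v ≠ relPos r v x := by
    rcases hpos with hpos | hpos <;> simp [hself, hpos]
  have halt := h.of_blowUp hL hv hx hc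
  rcases hpos with hpos | hpos <;> simp [hself, hpos, alternates_iff_isChain, relPosWord] at halt

theorem IsSemiTransitive.wordRepresentable [Finite V] [DecidableEq V] (hr : IsSemiTransitive r)
    {G : SimpleGraph V} (hG : ∀ x y, G.Adj x y ↔ r x y ∨ r y x) : WordRepresentable G := by
  obtain ⟨L, hL, hmem, hsort⟩ := exists_topologicalSort hr.acyclic
  let word (v : V) : List V := blowUp relPosWord (relPos r v) L
  have alternates_of_arc {x y : V} (hxy : r x y) : Alternates (L.flatMap word) x y := by
    refine AlternatesFrom.alternates (.flatMap fun v _ =>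
      hr.alternatesFrom_blowUp hL hmem hsort v hxy) ?_
    rintro rfl
    exact hr.acyclic x (.single hxy)
  have not_alternates {x y : V} (hne : x ≠ y) (hadj : ¬ G.Adj x y) (hyx : ¬ TransGen r y x) :
      ¬ Alternates (L.flatMap word) x y := fun h =>
    not_alternates_blowUp_relPos hL (hmem x) (hmem y) hne.symm
      (fun hxy => hadj ((hG x y).2 (.inl hxy))) hyx
      (h.of_infix (List.infix_flatMap_of_mem (hmem x) word))
  refine ⟨L.flatMap word, fun v => List.mem_flatMap.2
    ⟨v, hmem v, mem_blowUp.2 ⟨hmem v, mem_relPosWord _⟩⟩, fun x y hne => ⟨fun h => ?_, fun h => ?_⟩⟩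
  · by_contra hadj
    by_cases hyx : TransGen r y x
    · exact not_alternates hne.symm (fun h => hadj h.symm)
        (fun hxy => hr.acyclic x (hxy.trans hyx)) h.symm
    · exact not_alternates hne hadj hyx h
  · rcases (hG x y).1 h with hxy | hyx
    · exact alternates_of_arc hxy
    · exact (alternates_of_arc hyx).symm

end SemiTransitive

section Toeplitz

open Relation

variable {l m n : ℕ}

/-- The edges of the Toeplitz graph of `1^l 0^m`, on all of `ℕ`, directed from the smaller to the
larger residue modulo `l + m`. -/
def residueArc (l m i j : ℕ) : Prop :=
  i % (l + m) < j % (l + m) ∧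
    (i ≤ j ∧ j % (l + m) ≤ i % (l + m) + l ∨ j < i ∧ i % (l + m) + m ≤ j % (l + m))

theorem mod_lt_mod_of_residueArc_path {i j : ℕ} (h : TransGen (residueArc l m) i j) :
    i % (l + m) < j % (l + m) ∧ (j % (l + m) < i % (l + m) + m → i ≤ j) := by
  induction h with
  | single h => unfold residueArc at h; omega
  | tail _ h ih => unfold residueArc at h; omega

theorem isSemiTransitive_residueArc (hm : 0 < m) : IsSemiTransitive (residueArc l m) where
  acyclic i h := (mod_lt_mod_of_residueArc_path h).1.false
  no_shortcut {i j k} hik hij hjk := by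
    have := mod_lt_mod_of_residueArc_path hij
    have := mod_lt_mod_of_residueArc_path hjk
    have := Nat.mod_lt k (Nat.add_pos_right l hm)
    unfold residueArc at *
    omega

theorem one_le_repMod_and_repMod_le_iff (hm : 0 < m) {d : ℕ} :
    1 ≤ repMod d (l + m) ∧ repMod d (l + m) ≤ l ↔ 1 ≤ d % (l + m) ∧ d % (l + m) ≤ l := by
  unfold repMod
  split_ifs <;> omega

theorem residueArc_or_residueArc_iff (hm : 0 < m) {i j : ℕ} (hij : i < j) :
    residueArc l m i j ∨ residueArc l m j i ↔
      1 ≤ (j - i) % (l + m) ∧ (j - i) % (l + m) ≤ l := by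
  obtain ⟨d, rfl⟩ := Nat.exists_eq_add_of_le hij.le
  have hi := Nat.mod_lt i (Nat.add_pos_right l hm)
  have hd := Nat.mod_lt d (Nat.add_pos_right l hm)
  have hmod := Nat.add_mod_add_ite i d (l + m)
  rw [Nat.add_sub_cancel_left]
  unfold residueArc
  split_ifs at hmod <;> omega

theorem toeplitzGraph_adj_iff_of_lt {p : ℕ} {a : ℕ → Bool} {i j : Fin n} (hij : i < j) :
    (toeplitzGraph n p a).Adj i j ↔ a (repMod (j - i) p) = true := by
  simp [toeplitzGraph, hij, hij.ne, hij.not_gt]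

theorem toeplitzGraph_adj_iff_residueArc (hm : 0 < m) (i j : Fin n) :
    (toeplitzGraph n (l + m) (fun r => decide (1 ≤ r ∧ r ≤ l))).Adj i j ↔
      residueArc l m i j ∨ residueArc l m j i := by
  have adj_iff_of_lt {i j : Fin n} (hij : i < j) :
      (toeplitzGraph n (l + m) (fun r => decide (1 ≤ r ∧ r ≤ l))).Adj i j ↔
        residueArc l m i j ∨ residueArc l m j i := by
    rw [toeplitzGraph_adj_iff_of_lt hij, decide_eq_true_iff, one_le_repMod_and_repMod_le_iff hm,
      residueArc_or_residueArc_iff hm hij]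
  rcases lt_trichotomy i j with hij | rfl | hji
  · exact adj_iff_of_lt hij
  · simp [residueArc]
  · rw [SimpleGraph.adj_comm, or_comm, adj_iff_of_lt hji]

end Toeplitz

/-- The Toeplitz graph G_n(1^l 0^m): vertices i < j are adjacent iff the
representative of j − i modulo l+m taken in {1,...,l+m} is at most l.
It is word-representable. -/
theorem toeplitz_1l0m_word_representable (l m n : ℕ)
    (hl : 0 < l) (hm : 0 < m) (hn : 0 < n) :
    WordRepresentable (toeplitzGraph n (l + m)
      (fun r => decide (1 ≤ r ∧ r ≤ l))) := by
  exact ((isSemiTransitive_residueArc hm).comap Fin.val).wordRepresentable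
    (toeplitzGraph_adj_iff_residueArc hm)
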